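/- For every (t,k), any strategies (γ^k, γ^{-k}) and any realization (i_t^k, u_t^k) of positive probability, the private posterior process is conditionally Markov with respect to the common data: ℙ^{γ^k,γ^{-k}}(Ξ_{t+1}^k[I_{t+1}^k] = ξ' | I_t^k = i_t^k, U_t^k = u_t^k) = ℙ^{γ^{-k}}(Ξ_{t+1}^k = ξ' | Ξ_t^k = ξ_t^k, Δ_t^{(K)} = δ_t^{(K)}, U_t^k = u_t^k), where ξ_t^k = Ξ_t^k[i_t^k] and i_t^k = {δ_t^{(K)}, λ_t^k}; moreover this transition probability does not depend on the strategy γ^k of station k. -/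

import Mathlib

/-!
Decentralized stochastic network with `T`-step delayed sharing information patterns
(canonical finite-path-space formalization).

Times are 0-based: the paper's horizon `{1,…,n}` is encoded as `{0,…,n}` here
(so the paper's terminal time `n` is `n`, and paper time `t` corresponds to index `t-1`).

The sample space is the (finite) space of state/observation trajectories; given a
strategy profile the actions are determined recursively, and the probability of a
trajectory is the product of the Markovian kernels.  All posteriors (the private
posterior `Ξ` and the centralized posteriors `Π`, `Θ`) are elementary conditional
probabilities on this finite space.
-/

open Finset
open scoped BigOperators Classical

namespace DelayedSharing

/-- Canonical sample space: trajectories of states and observations over times `0,…,n`. -/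
abbrev Traj (n : ℕ) (X : Type) {K : ℕ} (Y : Fin K → Type) : Type :=
  (Fin (n + 1) → X) × (Fin (n + 1) → ∀ k, Y k)

/-- Clamped index into the horizon `{0,…,n}`. -/
def idx (n t : ℕ) : Fin (n + 1) := ⟨min t n, Nat.lt_succ_of_le (Nat.min_le_right t n)⟩

/-- A strategy profile: station `k`'s map, at each time, from full observation/action
histories to an action in the action space `U k`.  Admissibility (below) restricts the
dependence to the `T`-step delayed sharing information pattern `I_t^k`. -/
abbrev Strat {K : ℕ} (Y U : Fin K → Type) : Type :=
  ∀ k : Fin K, ℕ → (ℕ → ∀ j, Y j) → (ℕ → ∀ j, U j) → U k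

/-- A strategy of the single station `k`. -/
abbrev SStrat {K : ℕ} (Y U : Fin K → Type) (k : Fin K) : Type :=
  ℕ → (ℕ → ∀ j, Y j) → (ℕ → ∀ j, U j) → U k

variable {X : Type} {K : ℕ} {Y U : Fin K → Type}

def stateAt {n : ℕ} (ω : Traj n X Y) (t : ℕ) : X := ω.1 (idx n t)

def obsAt {n : ℕ} (ω : Traj n X Y) (t : ℕ) (k : Fin K) : Y k := ω.2 (idx n t) k

/-- `γ` is admissible for the `T`-step delayed sharing pattern: `γ k t` depends only on
`I_t^k = {Δ_t^{(K)}, Λ_t^k}`, i.e. on all stations' observations/actions up to time `t-T`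
(0-based: times `s` with `s + T ≤ t`), own observations up to `t` and own actions up to
`t-1`. -/
def Admissible (T : ℕ) (γ : Strat Y U) : Prop :=
  ∀ (k : Fin K) (t : ℕ) (y y' : ℕ → ∀ j, Y j) (u u' : ℕ → ∀ j, U j),
    (∀ s j, s + T ≤ t → y s j = y' s j) →
    (∀ s j, s + T ≤ t → u s j = u' s j) →
    (∀ s, s ≤ t → y s k = y' s k) →
    (∀ s, s < t → u s k = u' s k) →
    γ k t y u = γ k t y' u'

/-- Admissibility of a single station's strategy. -/
def SAdmissible (T : ℕ) (k : Fin K) (g : SStrat Y U k) : Prop :=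
  ∀ (t : ℕ) (y y' : ℕ → ∀ j, Y j) (u u' : ℕ → ∀ j, U j),
    (∀ s j, s + T ≤ t → y s j = y' s j) →
    (∀ s j, s + T ≤ t → u s j = u' s j) →
    (∀ s, s ≤ t → y s k = y' s k) →
    (∀ s, s < t → u s k = u' s k) →
    g t y u = g t y' u'

/-- Replace station `k`'s strategy in the profile `γ` by `g`. -/
def updStrat (γ : Strat Y U) (k : Fin K) (g : SStrat Y U k) : Strat Y U :=
  fun j => if h : j = k then (by subst h; exact g) else γ j

/-- Station `k` uses `g₁` before time `t` and `g₂` from time `t` on. -/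
def splice {k : Fin K} (g₁ g₂ : SStrat Y U k) (t : ℕ) : SStrat Y U k :=
  fun τ => if τ < t then g₁ τ else g₂ τ

variable [∀ k, Nonempty (U k)]

/-- The actions at times `< t` generated recursively by the strategy profile `γ` from the
observation path `y`. -/
noncomputable def actUpto (γ : Strat Y U) (y : ℕ → ∀ j, Y j) : ℕ → ℕ → ∀ j, U j
  | 0 => fun _ j => Classical.arbitrary (U j)
  | t + 1 => fun s => if s = t then (fun j => γ j t y (actUpto γ y t)) else actUpto γ y t s

/-- The action profile at time `t` generated by `γ` from the observation path `y`. -/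
noncomputable def act (γ : Strat Y U) (y : ℕ → ∀ j, Y j) (t : ℕ) : ∀ j, U j :=
  fun j => γ j t y (actUpto γ y t)

/-- The realized action profile along a trajectory. -/
noncomputable def actAt {n : ℕ} (γ : Strat Y U) (ω : Traj n X Y) (t : ℕ) : ∀ j, U j :=
  act γ (fun s => ω.2 (idx n s)) t

/-- The Markovian kernels and the per-stage cost of the decentralized network (0-based):
`prior` is the PMF of the initial state; `obs0 k` the PMF of station `k`'s initial
observation given the initial state; `trans t` the transition PMF from time `t` to `t+1`
given the action profile at time `t`; `obs t k` the PMF of station `k`'s observation at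
time `t+1` given the state at `t+1` and the action profile at time `t` (the observations
of the stations being conditionally independent given these); `cost t` the per-stage
cost `ℓ(t,·,·)`. -/
structure Kernels (X : Type) {K : ℕ} (Y U : Fin K → Type) where
  prior : X → ℝ
  obs0 : ∀ k : Fin K, X → Y k → ℝ
  trans : ℕ → X → (∀ j, U j) → X → ℝ
  obs : ℕ → ∀ k : Fin K, X → (∀ j, U j) → Y k → ℝ
  cost : ℕ → X → (∀ j, U j) → ℝ

variable [Fintype X] [∀ k, Fintype (Y k)]

/-- All the kernels are genuine probability mass functions. -/
def Kernels.IsPMF (M : Kernels X Y U) : Prop :=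
  (∀ x, 0 ≤ M.prior x) ∧ (∑ x, M.prior x) = 1 ∧
  (∀ (k : Fin K) x, (∀ y, 0 ≤ M.obs0 k x y) ∧ (∑ y, M.obs0 k x y) = 1) ∧
  (∀ t x u, (∀ x', 0 ≤ M.trans t x u x') ∧ (∑ x', M.trans t x u x') = 1) ∧
  (∀ t (k : Fin K) x u, (∀ y, 0 ≤ M.obs t k x u y) ∧ (∑ y, M.obs t k x u y) = 1)

/-- The probability of a trajectory under the strategy profile `γ`: the product of the
Markovian kernels along the path, the actions being generated by `γ`. -/
noncomputable def prob (n : ℕ) (M : Kernels X Y U) (γ : Strat Y U) (ω : Traj n X Y) : ℝ :=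
  M.prior (stateAt ω 0) * (∏ k, M.obs0 k (stateAt ω 0) (obsAt ω 0 k)) *
    ∏ t ∈ Finset.range n,
      (M.trans t (stateAt ω t) (actAt γ ω t) (stateAt ω (t + 1)) *
        ∏ k, M.obs t k (stateAt ω (t + 1)) (actAt γ ω t) (obsAt ω (t + 1) k))

/-- `ℙ^γ(A)` on the canonical finite path space. -/
noncomputable def Pr (n : ℕ) (M : Kernels X Y U) (γ : Strat Y U) (A : Traj n X Y → Prop) : ℝ :=
  ∑ ω : Traj n X Y, if A ω then prob n M γ ω else 0

/-- Conditional probability `ℙ^γ(A | B)`. -/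
noncomputable def condPr (n : ℕ) (M : Kernels X Y U) (γ : Strat Y U)
    (A B : Traj n X Y → Prop) : ℝ :=
  Pr n M γ (fun ω => A ω ∧ B ω) / Pr n M γ B

/-- The expected total cost `J_n(γ) = 𝔼^γ [Σ_t ℓ(t, X_t, U_t^{(K)})]`. -/
noncomputable def J (n : ℕ) (M : Kernels X Y U) (γ : Strat Y U) : ℝ :=
  ∑ ω : Traj n X Y, prob n M γ ω *
    ∑ t ∈ Finset.range (n + 1), M.cost t (stateAt ω t) (actAt γ ω t)

/-- The conditional cost-to-go from time `t` given the event `B`: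
`𝔼^γ [Σ_{τ=t}^n ℓ(τ, X_τ, U_τ^{(K)}) | B]`. -/
noncomputable def Jcond (n : ℕ) (M : Kernels X Y U) (γ : Strat Y U) (t : ℕ)
    (B : Traj n X Y → Prop) : ℝ :=
  (∑ ω : Traj n X Y,
      if B ω then prob n M γ ω * ∑ τ ∈ Finset.Icc t n, M.cost τ (stateAt ω τ) (actAt γ ω τ)
      else 0) / Pr n M γ B

/-- Person-by-person optimality of the profile `γo`. -/
noncomputable def PbPOptimal (n T : ℕ) (M : Kernels X Y U) (γo : Strat Y U) : Prop :=
  Admissible T γo ∧ ∀ (k : Fin K) (g : SStrat Y U k),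
    Admissible T (updStrat γo k g) → J n M γo ≤ J n M (updStrat γo k g)

/-- Person-by-person optimality of `γo` within the class `P` of strategy profiles. -/
noncomputable def PbPOptimalIn (n T : ℕ) (M : Kernels X Y U) (P : Strat Y U → Prop)
    (γo : Strat Y U) : Prop :=
  Admissible T γo ∧ P γo ∧ ∀ (k : Fin K) (g : SStrat Y U k),
    Admissible T (updStrat γo k g) → P (updStrat γo k g) →
      J n M γo ≤ J n M (updStrat γo k g)

/-! ### Information events: realizations of `I_t^k`, `Δ_t^{(K)}`, `Λ_t^k` -/

/-- The event `{I_t^k = i_t^k}`, where the realization `i_t^k = {δ_t^{(K)}, λ_t^k}` is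
recorded by total functions `iy, iu` (only the coordinates of the information pattern
matter). -/
def InfoEq {n : ℕ} (T : ℕ) (γ : Strat Y U) (k : Fin K) (t : ℕ)
    (iy : ℕ → ∀ j, Y j) (iu : ℕ → ∀ j, U j) (ω : Traj n X Y) : Prop :=
  (∀ s j, s + T ≤ t → obsAt ω s j = iy s j) ∧
  (∀ s j, s + T ≤ t → actAt γ ω s j = iu s j) ∧
  (∀ s, s ≤ t → obsAt ω s k = iy s k) ∧
  (∀ s, s < t → actAt γ ω s k = iu s k)

/-- The event `{Δ_t^{(K)} = δ_t^{(K)}}` (common/shared data). -/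
def CommonEq {n : ℕ} (T : ℕ) (γ : Strat Y U) (t : ℕ)
    (δy : ℕ → ∀ j, Y j) (δu : ℕ → ∀ j, U j) (ω : Traj n X Y) : Prop :=
  (∀ s j, s + T ≤ t → obsAt ω s j = δy s j) ∧
  (∀ s j, s + T ≤ t → actAt γ ω s j = δu s j)

/-- The event `{Λ_t^{-k} = λ_t^{-k}}` (private data of the other stations). -/
def PrivOthersEq {n : ℕ} (T : ℕ) (γ : Strat Y U) (k : Fin K) (t : ℕ)
    (ly : ℕ → ∀ j, Y j) (lu : ℕ → ∀ j, U j) (ω : Traj n X Y) : Prop :=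
  (∀ s j, j ≠ k → s ≤ t → t < s + T → obsAt ω s j = ly s j) ∧
  (∀ s j, j ≠ k → s < t → t < s + T → actAt γ ω s j = lu s j)

/-- The event `{Λ_t^{(K)} = λ_t^{(K)}}` (private data of all stations). -/
def PrivAllEq {n : ℕ} (T : ℕ) (γ : Strat Y U) (t : ℕ)
    (ly : ℕ → ∀ j, Y j) (lu : ℕ → ∀ j, U j) (ω : Traj n X Y) : Prop :=
  (∀ s j, s ≤ t → t < s + T → obsAt ω s j = ly s j) ∧
  (∀ s j, s < t → t < s + T → actAt γ ω s j = lu s j)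

/-- Agreement of two trajectories on the common data `Δ_t^{(K)}`. -/
def CommonAgree {n : ℕ} (T : ℕ) (γ : Strat Y U) (t : ℕ) (ω ω' : Traj n X Y) : Prop :=
  (∀ s (j : Fin K), s + T ≤ t → obsAt ω s j = obsAt ω' s j) ∧
  (∀ s (j : Fin K), s + T ≤ t → actAt γ ω s j = actAt γ ω' s j)

/-- Agreement of two trajectories on station `k`'s private data `Λ_t^k`. -/
def PrivAgree {n : ℕ} (T : ℕ) (γ : Strat Y U) (k : Fin K) (t : ℕ) (ω ω' : Traj n X Y) : Prop :=
  (∀ s, s ≤ t → t < s + T → obsAt ω s k = obsAt ω' s k) ∧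
  (∀ s, s < t → t < s + T → actAt γ ω s k = actAt γ ω' s k)

/-- Agreement of two trajectories on station `k`'s information `I_t^k`. -/
def InfoAgree {n : ℕ} (T : ℕ) (γ : Strat Y U) (k : Fin K) (t : ℕ) (ω ω' : Traj n X Y) : Prop :=
  CommonAgree T γ t ω ω' ∧
  (∀ s, s ≤ t → obsAt ω s k = obsAt ω' s k) ∧
  (∀ s, s < t → actAt γ ω s k = actAt γ ω' s k)

/-! ### Posteriors -/

/-- The private posterior `Ξ_t^k[i_t^k](x, λ_t^{-k})
 = ℙ^γ(X_t = x, Λ_t^{-k} = λ_t^{-k} | I_t^k = i_t^k)`. -/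
noncomputable def Xi (n T : ℕ) (M : Kernels X Y U) (γ : Strat Y U) (k : Fin K) (t : ℕ)
    (iy : ℕ → ∀ j, Y j) (iu : ℕ → ∀ j, U j) (x : X)
    (ly : ℕ → ∀ j, Y j) (lu : ℕ → ∀ j, U j) : ℝ :=
  condPr n M γ (fun ω => stateAt ω t = x ∧ PrivOthersEq T γ k t ly lu ω)
    (InfoEq T γ k t iy iu)

/-- The centralized posterior `Π_t^{(K)}[δ_t^{(K)}](x) = ℙ^γ(X_{t-T} = x | Δ_t^{(K)} = δ)`. -/
noncomputable def PiPost (n T : ℕ) (M : Kernels X Y U) (γ : Strat Y U) (t : ℕ)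
    (δy : ℕ → ∀ j, Y j) (δu : ℕ → ∀ j, U j) (x : X) : ℝ :=
  condPr n M γ (fun ω => stateAt ω (t - T) = x) (CommonEq T γ t δy δu)

/-- The centralized posterior
`Θ_t^{γ}[δ_t^{(K)}](x, λ_t^{(K)}) = ℙ^γ(X_t = x, Λ_t^{(K)} = λ | Δ_t^{(K)} = δ)`. -/
noncomputable def ThetaPost (n T : ℕ) (M : Kernels X Y U) (γ : Strat Y U) (t : ℕ)
    (δy : ℕ → ∀ j, Y j) (δu : ℕ → ∀ j, U j) (x : X)
    (ly : ℕ → ∀ j, Y j) (lu : ℕ → ∀ j, U j) : ℝ :=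
  condPr n M γ (fun ω => stateAt ω t = x ∧ PrivAllEq T γ t ly lu ω) (CommonEq T γ t δy δu)

/-- The realization `I_t^k = i_t^k` has positive probability under `γ`. -/
noncomputable def PosInfo (n T : ℕ) (M : Kernels X Y U) (γ : Strat Y U) (k : Fin K) (t : ℕ)
    (iy : ℕ → ∀ j, Y j) (iu : ℕ → ∀ j, U j) : Prop :=
  0 < Pr n M γ (InfoEq T γ k t iy iu)

/-- The random private posterior `Ξ_t^k[I_t^k]` evaluated along the trajectory `ω`. -/
noncomputable def XiAt (n T : ℕ) (M : Kernels X Y U) (γ : Strat Y U) (k : Fin K) (t : ℕ)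
    (ω : Traj n X Y) : X → (ℕ → ∀ j, Y j) → (ℕ → ∀ j, U j) → ℝ :=
  fun x ly lu => Xi n T M γ k t (fun s => ω.2 (idx n s)) (actAt γ ω) x ly lu

/-! ### Finite parametrization of private realizations -/

variable [∀ k, DecidableEq (Y k)] [∀ k, DecidableEq (U k)] [∀ k, Fintype (U k)]
variable [∀ k, Nonempty (Y k)]

/-- Canonical (finite) set of realizations of `Λ_t^{-k}`: pairs of functions supported on
the private windows of the stations `j ≠ k` (observations at times `s ≤ t` with
`t < s + T`; actions at times `s < t` with `t < s + T`) and equal to a fixed default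
outside. -/
noncomputable def privSet (n T : ℕ) (k : Fin K) (t : ℕ) :
    Finset ((Fin (n + 1) → ∀ j, Y j) × (Fin (n + 1) → ∀ j, U j)) :=
  Finset.univ.filter (fun p =>
    (∀ (s : Fin (n + 1)) (j : Fin K), ¬(j ≠ k ∧ s.1 ≤ t ∧ t < s.1 + T) →
        p.1 s j = Classical.arbitrary (Y j)) ∧
    (∀ (s : Fin (n + 1)) (j : Fin K), ¬(j ≠ k ∧ s.1 < t ∧ t < s.1 + T) →
        p.2 s j = Classical.arbitrary (U j)))

/-- Canonical (finite) set of realizations of `Λ_t^{(K)}` (all stations). -/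
noncomputable def privAllSet (n T t : ℕ) :
    Finset ((Fin (n + 1) → ∀ j, Y j) × (Fin (n + 1) → ∀ j, U j)) :=
  Finset.univ.filter (fun p =>
    (∀ (s : Fin (n + 1)) (j : Fin K), ¬(s.1 ≤ t ∧ t < s.1 + T) →
        p.1 s j = Classical.arbitrary (Y j)) ∧
    (∀ (s : Fin (n + 1)) (j : Fin K), ¬(s.1 < t ∧ t < s.1 + T) →
        p.2 s j = Classical.arbitrary (U j)))

/-- View the observation part of a private realization as a (ℕ-indexed) realization
function. -/
def pWinY {n : ℕ} (p : (Fin (n + 1) → ∀ j, Y j) × (Fin (n + 1) → ∀ j, U j)) :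
    ℕ → ∀ j, Y j := fun s => p.1 (idx n s)

/-- View the action part of a private realization as a realization function. -/
def pWinU {n : ℕ} (p : (Fin (n + 1) → ∀ j, Y j) × (Fin (n + 1) → ∀ j, U j)) :
    ℕ → ∀ j, U j := fun s => p.2 (idx n s)

/-- The observation history obtained by combining the realized information `iy` of
station `k` (own and common coordinates) with the private window `py` of the other
stations. -/
def mixObs {n : ℕ} (T t : ℕ) (k : Fin K) (iy : ℕ → ∀ j, Y j)
    (py : Fin (n + 1) → ∀ j, Y j) : ℕ → ∀ j, Y j :=
  fun s j => if j = k ∨ s + T ≤ t then iy s j else py (idx n s) j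

/-- The action history obtained by combining the realized information `iu` of station `k`
with the private window `pu` of the other stations. -/
def mixAct {n : ℕ} (T t : ℕ) (k : Fin K) (iu : ℕ → ∀ j, U j)
    (pu : Fin (n + 1) → ∀ j, U j) : ℕ → ∀ j, U j :=
  fun s j => if j = k ∨ s + T ≤ t then iu s j else pu (idx n s) j

/-- The action profile at time `t`: station `k` applies `u`, while each other station `j`
applies `γ_t^j(δ_t^{(K)}, λ_t^j)`, its strategy evaluated at the common data recorded in
`(iy, iu)` and its private data recorded in the window `p`. -/
noncomputable def prof {n : ℕ} (T t : ℕ) (γ : Strat Y U) (k : Fin K)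
    (iy : ℕ → ∀ j, Y j) (iu : ℕ → ∀ j, U j)
    (p : (Fin (n + 1) → ∀ j, Y j) × (Fin (n + 1) → ∀ j, U j)) (u : U k) : ∀ j, U j :=
  Function.update (fun j => γ j t (mixObs T t k iy p.1) (mixAct T t k iu p.2)) k u

/-- The observation history of all stations obtained from the common data `δy` and the
private windows `py` of all stations. -/
def mixObsAll {n : ℕ} (T t : ℕ) (δy : ℕ → ∀ j, Y j)
    (py : Fin (n + 1) → ∀ j, Y j) : ℕ → ∀ j, Y j :=
  fun s j => if s + T ≤ t then δy s j else py (idx n s) j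

/-- The action history of all stations obtained from the common data `δu` and the private
windows `pu` of all stations. -/
def mixActAll {n : ℕ} (T t : ℕ) (δu : ℕ → ∀ j, U j)
    (pu : Fin (n + 1) → ∀ j, U j) : ℕ → ∀ j, U j :=
  fun s j => if s + T ≤ t then δu s j else pu (idx n s) j

/-- The action profile `u_t^{(K)} = {γ_t^j(δ_t^{(K)}, λ_t^j)}_{j=1}^K`. -/
noncomputable def profAll {n : ℕ} (T t : ℕ) (γ : Strat Y U)
    (δy : ℕ → ∀ j, Y j) (δu : ℕ → ∀ j, U j)
    (p : (Fin (n + 1) → ∀ j, Y j) × (Fin (n + 1) → ∀ j, U j)) : ∀ j, U j :=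
  fun j => γ j t (mixObsAll T t δy p.1) (mixActAll T t δu p.2)

/-- The realization of `I_{t+1}^k` obtained from `i_t^k = (iy, iu)`, the new own
observation `y'` at time `t+1` and the private window `p` of the other stations. -/
noncomputable def newObs {n : ℕ} (T t : ℕ) (k : Fin K) (iy : ℕ → ∀ j, Y j)
    (p : (Fin (n + 1) → ∀ j, Y j) × (Fin (n + 1) → ∀ j, U j)) (y' : Y k) : ℕ → ∀ j, Y j :=
  fun s => if s = t + 1 then Function.update (fun j => iy s j) k y' else mixObs T t k iy p.1 s

/-- The action part of the realization of `I_{t+1}^k`: at time `t` station `k` applies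
`u` and the others apply their strategies. -/
noncomputable def newAct {n : ℕ} (T t : ℕ) (γ : Strat Y U) (k : Fin K)
    (iy : ℕ → ∀ j, Y j) (iu : ℕ → ∀ j, U j)
    (p : (Fin (n + 1) → ∀ j, Y j) × (Fin (n + 1) → ∀ j, U j)) (u : U k) : ℕ → ∀ j, U j :=
  fun s => if s = t then prof T t γ k iy iu p u else mixAct T t k iu p.2 s

/-! ### Dynamic programming equations (Theorem 3 (1.1)) -/

/-- The expected stage cost at time `t` under the private posterior `Ξ_t^k[i_t^k]` when
station `k` applies `u` and the other stations apply their strategies: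
`Σ_{x_t, λ_t^{-k}} ℓ(t, x_t, u_t^k, γ_t^{-k}(δ_t^{(K)}, λ_t^{-k})) Ξ_t^k[i_t^k](x_t, λ_t^{-k})`. -/
noncomputable def dpStage (n T : ℕ) (M : Kernels X Y U) (γ : Strat Y U) (k : Fin K)
    (t : ℕ) (iy : ℕ → ∀ j, Y j) (iu : ℕ → ∀ j, U j) (u : U k) : ℝ :=
  ∑ x : X, ∑ p ∈ privSet n T k t,
    M.cost t x (prof T t γ k iy iu p u) * Xi n T M γ k t iy iu x (pWinY p) (pWinU p)

/-- The expected continuation value: the function `V` at time `t+1`, evaluated at the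
updated realization `(i_t^k, y_{t+1}^k, u_t^k, y_{t-T+1}^{-k}, u_{t-T+1}^{-k})`, averaged
with the kernel
`q_{t+1}^k(dy_{t+1}^k | x_{t+1}, u) s_{t+1}(dx_{t+1} | x_t, u) Ξ_t^k[i_t^k](dx_t, dλ_t^{-k})`. -/
noncomputable def dpCont (n T : ℕ) (M : Kernels X Y U) (γ : Strat Y U) (k : Fin K)
    (t : ℕ) (iy : ℕ → ∀ j, Y j) (iu : ℕ → ∀ j, U j)
    (V : ℕ → (ℕ → ∀ j, Y j) → (ℕ → ∀ j, U j) → ℝ) (u : U k) : ℝ :=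
  ∑ y' : Y k, ∑ x : X, ∑ x' : X, ∑ p ∈ privSet n T k t,
    V (t + 1) (newObs T t k iy p y') (newAct T t γ k iy iu p u) *
      M.obs t k x' (prof T t γ k iy iu p u) y' *
      M.trans t x (prof T t γ k iy iu p u) x' *
      Xi n T M γ k t iy iu x (pWinY p) (pWinU p)

/-- `V` satisfies the dynamic programming equations of Theorem 3 (1.1) for station `k`
(with the other stations' strategies fixed to those of `γ`): at the terminal time the
minimum over the action space of the expected stage cost, and before that the minimum
over the action space of expected stage cost plus expected continuation value, on every
realization of `I_t^k` of positive probability. -/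
noncomputable def SatisfiesDP (n T : ℕ) (M : Kernels X Y U) (γ : Strat Y U) (k : Fin K)
    (V : ℕ → (ℕ → ∀ j, Y j) → (ℕ → ∀ j, U j) → ℝ) : Prop :=
  (∀ iy iu, PosInfo n T M γ k n iy iu →
      V n iy iu = ⨅ u : U k, dpStage n T M γ k n iy iu u) ∧
  (∀ t iy iu, t < n → PosInfo n T M γ k t iy iu →
      V t iy iu = ⨅ u : U k, (dpStage n T M γ k t iy iu u + dpCont n T M γ k t iy iu V u))

/-- Station `k`'s strategy in `γ` attains, at every realization of positive probability,
the minimum in the dynamic programming equations with value function `V`. -/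
noncomputable def AttainsDP (n T : ℕ) (M : Kernels X Y U) (γ : Strat Y U) (k : Fin K)
    (V : ℕ → (ℕ → ∀ j, Y j) → (ℕ → ∀ j, U j) → ℝ) : Prop :=
  (∀ iy iu, PosInfo n T M γ k n iy iu →
      V n iy iu = dpStage n T M γ k n iy iu (γ k n iy iu)) ∧
  (∀ t iy iu, t < n → PosInfo n T M γ k t iy iu →
      V t iy iu = dpStage n T M γ k t iy iu (γ k t iy iu) +
        dpCont n T M γ k t iy iu V (γ k t iy iu))

/-- The value process `𝒱_t^{γ^{k,o}, γ^{-k,o}}(i_t^k)`: the infimum, over admissible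
strategies of station `k` used from time `t` on (station `k` using `γo`'s strategy before
`t` and the other stations using `γo` throughout), of the conditional cost-to-go given
`I_t^k = i_t^k`. -/
noncomputable def Vval (n T : ℕ) (M : Kernels X Y U) (γo : Strat Y U) (k : Fin K) (t : ℕ)
    (iy : ℕ → ∀ j, Y j) (iu : ℕ → ∀ j, U j) : ℝ :=
  sInf { r : ℝ | ∃ g : SStrat Y U k,
    Admissible T (updStrat γo k (splice (γo k) g t)) ∧
    r = Jcond n M (updStrat γo k (splice (γo k) g t)) t
          (InfoEq T (updStrat γo k (splice (γo k) g t)) k t iy iu) }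

/-! ### Structured strategy classes -/

/-- Semi-separated strategies: for every station `k` and time `t`, the action depends on
the information `i_t^k` only through `(Ξ_t^k[i_t^k], δ_t^{(K)}, λ_t^k)`. -/
noncomputable def SemiSeparated (n T : ℕ) (M : Kernels X Y U) (γ : Strat Y U) : Prop :=
  ∀ (k : Fin K) (t : ℕ) (y y' : ℕ → ∀ j, Y j) (u u' : ℕ → ∀ j, U j),
    (∀ x ly lu, Xi n T M γ k t y u x ly lu = Xi n T M γ k t y' u' x ly lu) →
    (∀ s j, s + T ≤ t → y s j = y' s j) →
    (∀ s j, s + T ≤ t → u s j = u' s j) →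
    (∀ s, s ≤ t → t < s + T → y s k = y' s k) →
    (∀ s, s < t → t < s + T → u s k = u' s k) →
    γ k t y u = γ k t y' u'

/-- Separated strategies (with the centralized posterior `Π`): the action depends on
`i_t^k` only through `(Ξ_t^k[i_t^k], Π_t^{(K)}[δ_t^{(K)}], λ_t^k)`. -/
noncomputable def SeparatedPi (n T : ℕ) (M : Kernels X Y U) (γ : Strat Y U) : Prop :=
  ∀ (k : Fin K) (t : ℕ) (y y' : ℕ → ∀ j, Y j) (u u' : ℕ → ∀ j, U j),
    (∀ x ly lu, Xi n T M γ k t y u x ly lu = Xi n T M γ k t y' u' x ly lu) →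
    (∀ x, PiPost n T M γ t y u x = PiPost n T M γ t y' u' x) →
    (∀ s, s ≤ t → t < s + T → y s k = y' s k) →
    (∀ s, s < t → t < s + T → u s k = u' s k) →
    γ k t y u = γ k t y' u'

/-- Separated strategies (with the centralized posterior `Θ`): the action depends on
`i_t^k` only through `(Ξ_t^k[i_t^k], Θ_t^{γ}[δ_t^{(K)}], λ_t^k)`. -/
noncomputable def SeparatedTheta (n T : ℕ) (M : Kernels X Y U) (γ : Strat Y U) : Prop :=
  ∀ (k : Fin K) (t : ℕ) (y y' : ℕ → ∀ j, Y j) (u u' : ℕ → ∀ j, U j),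
    (∀ x ly lu, Xi n T M γ k t y u x ly lu = Xi n T M γ k t y' u' x ly lu) →
    (∀ x ly lu, ThetaPost n T M γ t y u x ly lu = ThetaPost n T M γ t y' u' x ly lu) →
    (∀ s, s ≤ t → t < s + T → y s k = y' s k) →
    (∀ s, s < t → t < s + T → u s k = u' s k) →
    γ k t y u = γ k t y' u'

/-- Information-state strategies: the action depends on `i_t^k` only through the pair
`(Ξ_t^k[i_t^k], Θ_t^{γ}[δ_t^{(K)}])`. -/
noncomputable def InfoStateTheta (n T : ℕ) (M : Kernels X Y U) (γ : Strat Y U) : Prop :=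
  ∀ (k : Fin K) (t : ℕ) (y y' : ℕ → ∀ j, Y j) (u u' : ℕ → ∀ j, U j),
    (∀ x ly lu, Xi n T M γ k t y u x ly lu = Xi n T M γ k t y' u' x ly lu) →
    (∀ x ly lu, ThetaPost n T M γ t y u x ly lu = ThetaPost n T M γ t y' u' x ly lu) →
    γ k t y u = γ k t y' u'


/-! ### Helper lemmas -/

set_option linter.unusedSectionVars false

/-- The joint one-step kernel of state and observations. -/
noncomputable def kap (M : Kernels X Y U) (t : ℕ) (x : X) (a : ∀ j, U j)
    (z : X × (∀ j, Y j)) : ℝ :=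
  M.trans t x a z.1 * ∏ k, M.obs t k z.1 a (z.2 k)

/-- Overwrite the coordinates at time `m`. -/
def updT {n : ℕ} (ω : Traj n X Y) (m : ℕ) (z : X × (∀ j, Y j)) : Traj n X Y :=
  (Function.update ω.1 (idx n m) z.1, Function.update ω.2 (idx n m) z.2)

/-- Agreement of trajectories up to time `m`. -/
def Agree {n : ℕ} (m : ℕ) (ω ω' : Traj n X Y) : Prop :=
  ∀ s, s ≤ m → ω.1 (idx n s) = ω'.1 (idx n s) ∧ ω.2 (idx n s) = ω'.2 (idx n s)

theorem idx_ne {n s m : ℕ} (hs : s < m) (hm : m ≤ n) : idx n s ≠ idx n m := by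
  intro h
  have := congrArg Fin.val h
  simp only [idx] at this
  omega

theorem idx_val {n : ℕ} (s : Fin (n + 1)) : idx n s.1 = s := by
  apply Fin.ext
  have := s.2
  simp only [idx]
  omega

theorem agree_updT {n m : ℕ} (hm : m + 1 ≤ n) (ω : Traj n X Y) (z : X × (∀ j, Y j)) :
    Agree m (updT ω (m + 1) z) ω := by
  intro s hs
  have h : idx n s ≠ idx n (m + 1) := idx_ne (by omega) hm
  simp [updT, Function.update_of_ne h]

theorem sum_updT {n : ℕ} (m : ℕ) (G : Traj n X Y → ℝ) :
    ∑ ω : Traj n X Y, ∑ z : X × (∀ j, Y j), G (updT ω m z) =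
      (Fintype.card (X × (∀ j, Y j)) : ℝ) * ∑ ω : Traj n X Y, G ω := by
  let e : Traj n X Y × (X × (∀ j, Y j)) → Traj n X Y × (X × (∀ j, Y j)) :=
    fun p => (updT p.1 m p.2, (p.1.1 (idx n m), p.1.2 (idx n m)))
  have he : Function.Involutive e := by
    rintro ⟨⟨a, b⟩, ⟨c, d⟩⟩
    simp [e, updT]
  have h1 := Equiv.sum_comp he.toPerm (fun p => G p.1)
  have h2 : ∑ ω : Traj n X Y, ∑ z : X × (∀ j, Y j), G (updT ω m z) =
      ∑ p : Traj n X Y × (X × (∀ j, Y j)), G p.1 := by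
    rw [← h1]
    exact (Fintype.sum_prod_type
      (fun p : Traj n X Y × (X × (∀ j, Y j)) => G (updT p.1 m p.2))).symm
  rw [h2, Fintype.sum_prod_type]
  simp [Finset.mul_sum]

theorem actUpto_eq (γ : Strat Y U) (y : ℕ → ∀ j, Y j) (t s : ℕ) (h : s < t) :
    actUpto γ y t s = act γ y s := by
  induction t with
  | zero => omega
  | succ t ih =>
    by_cases hs : s = t
    · subst hs
      simp only [actUpto, if_true]
      rfl
    · simp only [actUpto, if_neg hs]
      exact ih (by omega)

theorem act_causal {T : ℕ} (hT : 1 ≤ T) {γ : Strat Y U} (hγ : Admissible T γ) (t : ℕ)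
    (y y' : ℕ → ∀ j, Y j) (h : ∀ s, s ≤ t → y s = y' s) : act γ y t = act γ y' t := by
  induction t using Nat.strong_induction_on with
  | _ t ih =>
    have hU : ∀ s, s < t → actUpto γ y t s = actUpto γ y' t s := by
      intro s hs
      rw [actUpto_eq _ _ _ _ hs, actUpto_eq _ _ _ _ hs]
      exact ih s hs (fun r hr => h r (by omega))
    funext j
    apply hγ
    · intro s i hs
      rw [h s (by omega)]
    · intro s i hs
      rw [hU s (by omega)]
    · intro s hs
      rw [h s hs]
    · intro s hs
      rw [hU s hs]

theorem actAt_causal {n T : ℕ} (hT : 1 ≤ T) {γ : Strat Y U} (hγ : Admissible T γ) {t m : ℕ}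
    (htm : t ≤ m) {ω ω' : Traj n X Y} (h : Agree m ω ω') : actAt γ ω t = actAt γ ω' t :=
  act_causal hT hγ t _ _ (fun s hs => (h s (by omega)).2)

/-- Prefix probability. -/
noncomputable def pU {n : ℕ} (M : Kernels X Y U) (γ : Strat Y U) (m : ℕ) (ω : Traj n X Y) : ℝ :=
  M.prior (stateAt ω 0) * (∏ k, M.obs0 k (stateAt ω 0) (obsAt ω 0 k)) *
    ∏ t ∈ Finset.range m,
      kap M t (stateAt ω t) (actAt γ ω t) (stateAt ω (t + 1), fun k => obsAt ω (t + 1) k)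

theorem stateAt_agree {n m : ℕ} {ω ω' : Traj n X Y} (h : Agree m ω ω') {s : ℕ} (hs : s ≤ m) :
    stateAt ω s = stateAt ω' s := (h s hs).1

theorem obsAt_agree {n m : ℕ} {ω ω' : Traj n X Y} (h : Agree m ω ω') {s : ℕ} (hs : s ≤ m)
    (j : Fin K) : obsAt ω s j = obsAt ω' s j := congrFun (h s hs).2 j

theorem pU_agree {n T : ℕ} (hT : 1 ≤ T) (M : Kernels X Y U) {γ : Strat Y U}
    (hγ : Admissible T γ) {m : ℕ} {ω ω' : Traj n X Y} (h : Agree m ω ω') :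
    pU M γ m ω = pU M γ m ω' := by
  unfold pU
  rw [stateAt_agree h (Nat.zero_le m)]
  congr 1
  · congr 1
    exact Finset.prod_congr rfl (fun k _ => by rw [obsAt_agree h (Nat.zero_le m)])
  · refine Finset.prod_congr rfl (fun t ht => ?_)
    have ht := Finset.mem_range.mp ht
    rw [stateAt_agree h (by omega : t ≤ m), stateAt_agree h (by omega : t + 1 ≤ m),
      actAt_causal hT hγ (by omega : t ≤ m) h]
    congr 2
    funext k
    exact obsAt_agree h (by omega) k

theorem kap_sum (M : Kernels X Y U) (hM : M.IsPMF) (t : ℕ) (x : X) (a : ∀ j, U j) :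
    ∑ z : X × (∀ j, Y j), kap M t x a z = 1 := by
  obtain ⟨_, _, _, h4, h5⟩ := hM
  rw [Fintype.sum_prod_type]
  simp only [kap]
  rw [← (h4 t x a).2]
  refine Finset.sum_congr rfl (fun x' _ => ?_)
  rw [← Finset.mul_sum, ← Fintype.prod_sum]
  simp [(h5 t _ x' a).2]

/-- The one-step averaging operator. -/
noncomputable def Lop {n : ℕ} (M : Kernels X Y U) (γ : Strat Y U) (m : ℕ)
    (F : Traj n X Y → ℝ) (ω : Traj n X Y) : ℝ :=
  ∑ z : X × (∀ j, Y j), kap M m (stateAt ω m) (actAt γ ω m) z * F (updT ω (m + 1) z)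

theorem S_step {n T : ℕ} (hT : 1 ≤ T) (M : Kernels X Y U) {γ : Strat Y U}
    (hγ : Admissible T γ) {m : ℕ} (hm : m + 1 ≤ n) (F : Traj n X Y → ℝ) :
    (Fintype.card (X × (∀ j, Y j)) : ℝ) * ∑ ω : Traj n X Y, F ω * pU M γ (m + 1) ω =
      ∑ ω : Traj n X Y, Lop M γ m F ω * pU M γ m ω := by
  rw [← sum_updT (m + 1)]
  refine Finset.sum_congr rfl (fun ω _ => ?_)
  rw [Lop, Finset.sum_mul]
  refine Finset.sum_congr rfl (fun z _ => ?_)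
  have hA := agree_updT hm ω z
  have h1 : pU M γ (m + 1) (updT ω (m + 1) z) = pU M γ m (updT ω (m + 1) z) *
      kap M m (stateAt (updT ω (m + 1) z) m) (actAt γ (updT ω (m + 1) z) m)
        (stateAt (updT ω (m + 1) z) (m + 1), fun k => obsAt (updT ω (m + 1) z) (m + 1) k) := by
    unfold pU
    rw [Finset.prod_range_succ, ← mul_assoc]
  rw [h1, pU_agree hT M hγ hA, stateAt_agree hA le_rfl, actAt_causal hT hγ le_rfl hA]
  have h2 : (stateAt (updT ω (m + 1) z) (m + 1), fun k => obsAt (updT ω (m + 1) z) (m + 1) k)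
      = z := by
    simp [stateAt, obsAt, updT]
  rw [h2]
  ring

theorem Lop_const {n : ℕ} (M : Kernels X Y U) (hM : M.IsPMF) (γ : Strat Y U) {m : ℕ}
    (hm : m + 1 ≤ n) (F : Traj n X Y → ℝ) (hF : ∀ ω ω', Agree m ω ω' → F ω = F ω') :
    Lop M γ m F = F := by
  funext ω
  unfold Lop
  have : ∀ z, F (updT ω (m + 1) z) = F ω := fun z => hF _ _ (agree_updT hm ω z)
  simp only [this]
  rw [← Finset.sum_mul, kap_sum M hM, one_mul]

theorem S_tail {n T : ℕ} (hT : 1 ≤ T) (M : Kernels X Y U) (hM : M.IsPMF) {γ : Strat Y U}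
    (hγ : Admissible T γ) (m d : ℕ) (hm : m + d ≤ n) (F : Traj n X Y → ℝ)
    (hF : ∀ ω ω', Agree m ω ω' → F ω = F ω') :
    (Fintype.card (X × (∀ j, Y j)) : ℝ) ^ d * ∑ ω : Traj n X Y, F ω * pU M γ (m + d) ω =
      ∑ ω : Traj n X Y, F ω * pU M γ m ω := by
  induction d with
  | zero => simp
  | succ d ih =>
    rw [pow_succ, mul_assoc, ← add_assoc, S_step hT M hγ (by omega),
      Lop_const M hM γ (by omega) F, ih (by omega)]
    intro ω ω' h
    exact hF _ _ (fun s hs => h s (by omega))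

theorem prob_eq_pU {n : ℕ} (M : Kernels X Y U) (γ : Strat Y U) (ω : Traj n X Y) :
    prob n M γ ω = pU M γ n ω := rfl

theorem one_step [Nonempty X] {n T : ℕ} (hT : 1 ≤ T) (M : Kernels X Y U) (hM : M.IsPMF)
    {γ : Strat Y U} (hγ : Admissible T γ) {t : ℕ} (ht : t < n) (F : Traj n X Y → ℝ)
    (hF : ∀ ω ω', Agree (t + 1) ω ω' → F ω = F ω') :
    ∑ ω : Traj n X Y, F ω * prob n M γ ω =
      ∑ ω : Traj n X Y, Lop M γ t F ω * prob n M γ ω := by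
  have hL : ∀ ω ω' : Traj n X Y, Agree t ω ω' → Lop M γ t F ω = Lop M γ t F ω' := by
    intro ω ω' h
    unfold Lop
    rw [stateAt_agree h le_rfl, actAt_causal hT hγ le_rfl h]
    refine Finset.sum_congr rfl (fun z _ => ?_)
    congr 1
    apply hF
    intro s hs
    by_cases hst : s = t + 1
    · subst hst
      simp [updT]
    · have h1 := agree_updT (m := t) (by omega) ω z s (by omega)
      have h2 := agree_updT (m := t) (by omega) ω' z s (by omega)
      have h3 := h s (by omega)
      exact ⟨h1.1.trans (h3.1.trans h2.1.symm), h1.2.trans (h3.2.trans h2.2.symm)⟩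
  obtain ⟨d, rfl⟩ : ∃ d, n = t + 1 + d := ⟨n - (t + 1), by omega⟩
  have e1 := S_tail hT M hM hγ (t + 1) d le_rfl F hF
  have e2 := S_step hT M hγ (m := t) (by omega) F
  have e3 := S_tail hT M hM hγ t (d + 1) (by omega) _ hL
  rw [← e1, ← e3] at e2
  simp only [prob_eq_pU]
  have hc : (Fintype.card (X × (∀ j, Y j)) : ℝ) ≠ 0 := by
    exact_mod_cast Fintype.card_ne_zero
  have e4 : t + (d + 1) = t + 1 + d := by omega
  rw [e4, ← mul_assoc, ← pow_succ'] at e2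
  exact mul_left_cancel₀ (pow_ne_zero _ hc) e2

/-- Signatures: time-`t` state and canonical representation of `Λ_t^{-k}`. -/
abbrev Sig (n : ℕ) (X : Type) {K : ℕ} (Y U : Fin K → Type) : Type :=
  X × ((Fin (n + 1) → ∀ j, Y j) × (Fin (n + 1) → ∀ j, U j))

/-- The signature of a trajectory. -/
noncomputable def sig {n : ℕ} (T : ℕ) (γ : Strat Y U) (k : Fin K) (t : ℕ) (ω : Traj n X Y) :
    Sig n X Y U :=
  (stateAt ω t,
    (fun s j => if j ≠ k ∧ s.1 ≤ t ∧ t < s.1 + T then obsAt ω s.1 j else Classical.arbitrary _,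
     fun s j => if j ≠ k ∧ s.1 < t ∧ t < s.1 + T then actAt γ ω s.1 j else Classical.arbitrary _))

/-- Indicator of a proposition. -/
noncomputable def ind (p : Prop) : ℝ := if p then 1 else 0

/-- Normalized expectation on the event `B`. -/
noncomputable def CE (n : ℕ) (M : Kernels X Y U) (γ : Strat Y U) (B : Traj n X Y → Prop)
    (F : Traj n X Y → ℝ) : ℝ :=
  (∑ ω : Traj n X Y, if B ω then F ω * prob n M γ ω else 0) / Pr n M γ B

theorem condPr_eq_CE (n : ℕ) (M : Kernels X Y U) (γ : Strat Y U) (A B : Traj n X Y → Prop) :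
    condPr n M γ A B = CE n M γ B (fun ω => ind (A ω)) := by
  unfold condPr CE Pr ind
  congr 1
  refine Finset.sum_congr rfl (fun ω _ => ?_)
  by_cases hA : A ω <;> by_cases hB : B ω <;> simp [hA, hB]

theorem CE_sig {n : ℕ} (M : Kernels X Y U) (γ : Strat Y U) (B : Traj n X Y → Prop)
    (σ : Traj n X Y → Sig n X Y U) (Φ : Sig n X Y U → ℝ) :
    CE n M γ B (fun ω => Φ (σ ω)) =
      ∑ v : Sig n X Y U, Φ v * condPr n M γ (fun ω => σ ω = v) B := by
  unfold CE condPr Pr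
  simp only [← mul_div_assoc]
  rw [← Finset.sum_div]
  congr 1
  simp only [Finset.mul_sum]
  rw [Finset.sum_comm]
  refine Finset.sum_congr rfl (fun ω _ => ?_)
  by_cases hB : B ω
  · simp [hB]
  · simp [hB]

theorem sig_eq_iff {n T : ℕ} (γ : Strat Y U) (k : Fin K) {t : ℕ} (ht : t ≤ n) (ω : Traj n X Y)
    (v : Sig n X Y U) :
    sig T γ k t ω = v ↔ v.2 ∈ privSet (Y := Y) (U := U) n T k t ∧
      (stateAt ω t = v.1 ∧ PrivOthersEq T γ k t (pWinY v.2) (pWinU v.2) ω) := by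
  have hidx : ∀ s, s ≤ t → (idx n s).1 = s := by
    intro s hs
    simp only [idx]
    omega
  obtain ⟨x, py, pu⟩ := v
  constructor
  · rintro h
    simp only [sig, Prod.mk.injEq] at h
    obtain ⟨rfl, rfl, rfl⟩ := h
    refine ⟨?_, rfl, ?_, ?_⟩
    · simp only [privSet, Finset.mem_filter, Finset.mem_univ, true_and]
      exact ⟨fun s j h => if_neg h, fun s j h => if_neg h⟩
    · intro s j hj hs hst
      simp only [pWinY, hidx s hs]
      rw [if_pos ⟨hj, hs, hst⟩]
    · intro s j hj hs hst
      simp only [pWinU, hidx s hs.le]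
      rw [if_pos ⟨hj, hs, hst⟩]
  · rintro ⟨hp, hx, ho, ha⟩
    simp only [privSet, Finset.mem_filter, Finset.mem_univ, true_and] at hp
    simp only [sig, Prod.mk.injEq]
    refine ⟨hx, ?_, ?_⟩
    · funext s j
      split_ifs with h
      · rw [ho s.1 j h.1 h.2.1 h.2.2, pWinY, idx_val]
      · exact (hp.1 s j h).symm
    · funext s j
      split_ifs with h
      · rw [ha s.1 j h.1 h.2.1 h.2.2, pWinU, idx_val]
      · exact (hp.2 s j h).symm

theorem sig_agree {n T : ℕ} (hT : 1 ≤ T) {γ : Strat Y U} (hγ : Admissible T γ) (k : Fin K)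
    {t : ℕ} {ω ω' : Traj n X Y} (h : Agree t ω ω') : sig T γ k t ω = sig T γ k t ω' := by
  unfold sig
  rw [stateAt_agree h le_rfl]
  congr 2
  · funext s j
    split_ifs with hs
    · exact obsAt_agree h hs.2.1 j
    · rfl
  · funext s j
    split_ifs with hs
    · rw [actAt_causal hT hγ hs.2.1.le h]
    · rfl

theorem info_agree {n T : ℕ} (hT : 1 ≤ T) {γ : Strat Y U} (hγ : Admissible T γ) (k : Fin K)
    {t : ℕ} (iy : ℕ → ∀ j, Y j) (iu : ℕ → ∀ j, U j) {ω ω' : Traj n X Y} (h : Agree t ω ω') :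
    InfoEq T γ k t iy iu ω → InfoEq T γ k t iy iu ω' := by
  rintro ⟨h1, h2, h3, h4⟩
  refine ⟨?_, ?_, ?_, ?_⟩
  · intro s j hs
    rw [← obsAt_agree h (by omega)]; exact h1 s j hs
  · intro s j hs
    rw [← actAt_causal hT hγ (by omega : s ≤ t) h]; exact h2 s j hs
  · intro s hs
    rw [← obsAt_agree h hs]; exact h3 s hs
  · intro s hs
    rw [← actAt_causal hT hγ hs.le h]; exact h4 s hs

theorem agree_symm {n m : ℕ} {ω ω' : Traj n X Y} (h : Agree m ω ω') : Agree m ω' ω :=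
  fun s hs => ⟨(h s hs).1.symm, (h s hs).2.symm⟩

/-- On `I_t^k = i`, station `k`'s action is determined. -/
theorem info_act {n T : ℕ} {γ : Strat Y U} (hγ : Admissible T γ) (hT : 1 ≤ T) (k : Fin K) {t : ℕ}
    (iy : ℕ → ∀ j, Y j) (iu : ℕ → ∀ j, U j) {ω : Traj n X Y}
    (h : InfoEq T γ k t iy iu ω) : actAt γ ω t k = γ k t iy iu := by
  obtain ⟨h1, h2, h3, h4⟩ := h
  refine hγ k t _ _ _ _ h1 ?_ h3 ?_
  · intro s j hs
    rw [actUpto_eq _ _ _ _ (by omega)]; exact h2 s j hs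
  · intro s hs
    rw [actUpto_eq _ _ _ _ hs]; exact h4 s hs

/-- The main transfer formula. -/
theorem CE_next [Nonempty X] {n T : ℕ} (hT : 1 ≤ T) (M : Kernels X Y U) (hM : M.IsPMF)
    {γ : Strat Y U} (hγ : Admissible T γ) (k : Fin K) {t : ℕ} (ht : t < n)
    (iy : ℕ → ∀ j, Y j) (iu : ℕ → ∀ j, U j) (a : Sig n X Y U → ∀ j, U j)
    (ha : ∀ ω : Traj n X Y, InfoEq T γ k t iy iu ω → actAt γ ω t = a (sig T γ k t ω))
    (Ψ : Sig n X Y U × (X × (∀ j, Y j)) → ℝ) :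
    CE n M γ (InfoEq T γ k t iy iu)
        (fun ω => Ψ (sig T γ k t ω, (stateAt ω (t + 1), fun j => obsAt ω (t + 1) j))) =
      ∑ v : Sig n X Y U, (∑ z, kap M t v.1 (a v) z * Ψ (v, z)) *
        (if v.2 ∈ privSet (Y := Y) (U := U) n T k t then
          Xi n T M γ k t iy iu v.1 (pWinY v.2) (pWinU v.2) else 0) := by
  have h1 : CE n M γ (InfoEq T γ k t iy iu)
        (fun ω => Ψ (sig T γ k t ω, (stateAt ω (t + 1), fun j => obsAt ω (t + 1) j))) =
      CE n M γ (InfoEq T γ k t iy iu)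
        (fun ω => (fun v : Sig n X Y U => ∑ z, kap M t v.1 (a v) z * Ψ (v, z)) (sig T γ k t ω)) := by
    unfold CE
    congr 1
    have := one_step hT M hM hγ ht (fun ω => if InfoEq T γ k t iy iu ω then
      Ψ (sig T γ k t ω, (stateAt ω (t + 1), fun j => obsAt ω (t + 1) j)) else 0) (by
        intro ω ω' h
        have h' : Agree t ω ω' := fun s hs => h s (by omega)
        have e1 : InfoEq T γ k t iy iu ω ↔ InfoEq T γ k t iy iu ω' :=
          ⟨info_agree hT hγ k iy iu h', info_agree hT hγ k iy iu (agree_symm h')⟩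
        have e2 : (fun j => obsAt ω (t + 1) j) = fun j => obsAt ω' (t + 1) j := by
          funext j; exact obsAt_agree h le_rfl j
        simp only [e1, sig_agree hT hγ k h', stateAt_agree h le_rfl, e2])
    simp only [ite_mul, zero_mul] at this
    rw [this]
    refine Finset.sum_congr rfl (fun ω _ => ?_)
    unfold Lop
    have hz : ∀ z, Agree t (updT ω (t + 1) z) ω := fun z => agree_updT (by omega) ω z
    have e1 : ∀ z, InfoEq T γ k t iy iu (updT ω (t + 1) z) ↔ InfoEq T γ k t iy iu ω :=
      fun z => ⟨info_agree hT hγ k iy iu (hz z), info_agree hT hγ k iy iu (agree_symm (hz z))⟩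
    have e2 : ∀ z, (stateAt (updT ω (t + 1) z) (t + 1),
        fun k => obsAt (updT ω (t + 1) z) (t + 1) k) = z := by
      intro z
      simp [stateAt, obsAt, updT]
    have e3 : ∀ z, sig T γ k t (updT ω (t + 1) z) = sig T γ k t ω :=
      fun z => sig_agree hT hγ k (hz z)
    simp only [e1, e2, e3]
    by_cases hB : InfoEq T γ k t iy iu ω
    · simp only [if_pos hB]
      rw [ha ω hB]
      rfl
    · simp [if_neg hB]
  rw [h1, CE_sig M γ (InfoEq T γ k t iy iu) (sig T γ k t)
    (fun v : Sig n X Y U => ∑ z, kap M t v.1 (a v) z * Ψ (v, z))]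
  refine Finset.sum_congr rfl (fun v _ => ?_)
  congr 1
  have h2 : (fun ω : Traj n X Y => sig T γ k t ω = v) = fun ω =>
      v.2 ∈ privSet (Y := Y) (U := U) n T k t ∧
      (stateAt ω t = v.1 ∧ PrivOthersEq T γ k t (pWinY v.2) (pWinU v.2) ω) := by
    funext ω
    exact propext (sig_eq_iff γ k ht.le ω v)
  rw [h2]
  split_ifs with hv
  · simp only [hv, true_and]
    rfl
  · simp [hv, condPr, Pr]

/-- Others' actions at time `s ≤ t` read off a signature. -/
noncomputable def actOf {n : ℕ} (t : ℕ) (a : Sig n X Y U → ∀ j, U j) (v : Sig n X Y U) (s : ℕ)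
    (j : Fin K) : U j := if s = t then a v j else v.2.2 (idx n s) j

/-- Others' observations at time `s ≤ t+1`. -/
noncomputable def obsOf {n : ℕ} (t : ℕ) (w : Sig n X Y U × (X × (∀ j, Y j))) (s : ℕ)
    (j : Fin K) : Y j := if s = t + 1 then w.2.2 j else w.1.2.1 (idx n s) j

/-- Same new information. -/
def NewEq {n : ℕ} (T t : ℕ) (k : Fin K) (a : Sig n X Y U → ∀ j, U j)
    (w w' : Sig n X Y U × (X × (∀ j, Y j))) : Prop :=
  w'.2.2 k = w.2.2 k ∧ ∀ s j, j ≠ k → s + T = t + 1 →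
    obsOf t w' s j = obsOf t w s j ∧ actOf t a w'.1 s j = actOf t a w.1 s j

/-- New posterior event. -/
def NewPost {n : ℕ} (T t : ℕ) (k : Fin K) (a : Sig n X Y U → ∀ j, U j)
    (x : X) (ly : ℕ → ∀ j, Y j) (lu : ℕ → ∀ j, U j)
    (w : Sig n X Y U × (X × (∀ j, Y j))) : Prop :=
  w.2.1 = x ∧
  (∀ s j, j ≠ k → s ≤ t + 1 → t + 1 < s + T → obsOf t w s j = ly s j) ∧
  (∀ s j, j ≠ k → s < t + 1 → t + 1 < s + T → actOf t a w.1 s j = lu s j)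

/-- Extended signature. -/
noncomputable def tau {n : ℕ} (T : ℕ) (γ : Strat Y U) (k : Fin K) (t : ℕ) (ω : Traj n X Y) :
    Sig n X Y U × (X × (∀ j, Y j)) :=
  (sig T γ k t ω, (stateAt ω (t + 1), fun j => obsAt ω (t + 1) j))

theorem actOf_tau {n T : ℕ} {γ : Strat Y U} (k : Fin K) {t : ℕ} (ht : t < n)
    (a : Sig n X Y U → ∀ j, U j) {ω : Traj n X Y} (ha : actAt γ ω t = a (sig T γ k t ω))
    {s : ℕ} (hs : s ≤ t) (hst : t + 1 ≤ s + T) {j : Fin K} (hj : j ≠ k) :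
    actOf t a (tau T γ k t ω).1 s j = actAt γ ω s j := by
  have hidx : (idx n s).1 = s := by simp only [idx]; omega
  unfold actOf tau
  split_ifs with h
  · rw [h, ha]
  · simp only [sig, hidx]
    rw [if_pos ⟨hj, by omega, by omega⟩]

theorem obsOf_tau {n T : ℕ} {γ : Strat Y U} (k : Fin K) {t : ℕ} (ht : t < n)
    {ω : Traj n X Y} {s : ℕ} (hs : s ≤ t + 1) (hst : t + 1 ≤ s + T) {j : Fin K} (hj : j ≠ k) :
    obsOf t (tau T γ k t ω) s j = obsAt ω s j := by
  have hidx : (idx n s).1 = s := by simp only [idx]; omega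
  unfold obsOf tau
  split_ifs with h
  · rw [h]
  · simp only [sig, hidx]
    rw [if_pos ⟨hj, by omega, by omega⟩]

theorem info_next {n T : ℕ} (hT : 1 ≤ T) {γ : Strat Y U} (hγ : Admissible T γ) (k : Fin K)
    {t : ℕ} (ht : t < n)
    (iy : ℕ → ∀ j, Y j) (iu : ℕ → ∀ j, U j) (a : Sig n X Y U → ∀ j, U j)
    (ha : ∀ ω : Traj n X Y, InfoEq T γ k t iy iu ω → actAt γ ω t = a (sig T γ k t ω))
    {ω : Traj n X Y} (hω : InfoEq T γ k t iy iu ω) (ω' : Traj n X Y) :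
    InfoEq T γ k (t + 1) (fun s => ω.2 (idx n s)) (actAt γ ω) ω' ↔
      NewEq T t k a (tau T γ k t ω) (tau T γ k t ω') ∧ InfoEq T γ k t iy iu ω' := by
  constructor
  · rintro ⟨h1, h2, h3, h4⟩
    have hB : InfoEq T γ k t iy iu ω' := by
      refine ⟨?_, ?_, ?_, ?_⟩
      · intro s j hs
        rw [h1 s j (by omega)]; exact hω.1 s j hs
      · intro s j hs
        rw [h2 s j (by omega)]; exact hω.2.1 s j hs
      · intro s hs
        rw [h3 s (by omega)]; exact hω.2.2.1 s hs
      · intro s hs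
        rw [h4 s (by omega)]; exact hω.2.2.2 s hs
    refine ⟨⟨h3 (t + 1) le_rfl, ?_⟩, hB⟩
    intro s j hj hs
    rw [actOf_tau k ht a (ha ω hω) (by omega) (by omega) hj,
      actOf_tau k ht a (ha ω' hB) (by omega) (by omega) hj,
      obsOf_tau k ht (by omega) (by omega) hj, obsOf_tau k ht (by omega) (by omega) hj]
    exact ⟨h1 s j (by omega), h2 s j (by omega)⟩
  · rintro ⟨⟨hy, hN⟩, hB⟩
    have hk3 : ∀ s, s ≤ t + 1 → obsAt ω' s k = obsAt ω s k := by
      intro s hs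
      by_cases h : s = t + 1
      · subst h; exact hy
      · rw [hB.2.2.1 s (by omega), hω.2.2.1 s (by omega)]
    have hk4 : ∀ s, s < t + 1 → actAt γ ω' s k = actAt γ ω s k := by
      intro s hs
      by_cases h : s = t
      · subst h; rw [info_act hγ hT k iy iu hB, info_act hγ hT k iy iu hω]
      · rw [hB.2.2.2 s (by omega), hω.2.2.2 s (by omega)]
    have key : ∀ s j, j ≠ k → s + T = t + 1 →
        obsAt ω' s j = obsAt ω s j ∧ actAt γ ω' s j = actAt γ ω s j := by
      intro s j hj hs
      have := hN s j hj hs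
      rwa [actOf_tau k ht a (ha ω hω) (by omega) (by omega) hj,
        actOf_tau k ht a (ha ω' hB) (by omega) (by omega) hj,
        obsOf_tau k ht (by omega) (by omega) hj,
        obsOf_tau k ht (by omega) (by omega) hj] at this
    refine ⟨?_, ?_, hk3, hk4⟩
    · intro s j hs
      change obsAt ω' s j = obsAt ω s j
      by_cases h : s + T ≤ t
      · rw [hB.1 s j h, hω.1 s j h]
      · by_cases hj : j = k
        · subst hj; exact hk3 s (by omega)
        · exact (key s j hj (by omega)).1
    · intro s j hs
      by_cases h : s + T ≤ t
      · rw [hB.2.1 s j h, hω.2.1 s j h]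
      · by_cases hj : j = k
        · subst hj; exact hk4 s (by omega)
        · exact (key s j hj (by omega)).2

theorem post_next {n T : ℕ} {γ : Strat Y U} (k : Fin K) {t : ℕ} (ht : t < n)
    (a : Sig n X Y U → ∀ j, U j) {ω : Traj n X Y} (ha : actAt γ ω t = a (sig T γ k t ω))
    (x : X) (ly : ℕ → ∀ j, Y j) (lu : ℕ → ∀ j, U j) :
    (stateAt ω (t + 1) = x ∧ PrivOthersEq T γ k (t + 1) ly lu ω) ↔
      NewPost T t k a x ly lu (tau T γ k t ω) := by
  unfold PrivOthersEq NewPost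
  refine and_congr Iff.rfl (and_congr ?_ ?_)
  · refine forall_congr' fun s => forall_congr' fun j => forall_congr' fun hj =>
      forall_congr' fun hs => forall_congr' fun hst => ?_
    rw [obsOf_tau k ht hs (by omega) hj]
  · refine forall_congr' fun s => forall_congr' fun j => forall_congr' fun hj =>
      forall_congr' fun hs => forall_congr' fun hst => ?_
    rw [actOf_tau k ht a ha (by omega) (by omega) hj]

/-- The updated posterior as a function of the extended signature. -/
noncomputable def Gpost {n : ℕ} (T t : ℕ) (k : Fin K) (a : Sig n X Y U → ∀ j, U j)
    (E : (Sig n X Y U × (X × (∀ j, Y j)) → ℝ) → ℝ) (w : Sig n X Y U × (X × (∀ j, Y j))) :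
    X → (ℕ → ∀ j, Y j) → (ℕ → ∀ j, U j) → ℝ :=
  fun x ly lu => E (fun w' => ind (NewPost T t k a x ly lu w' ∧ NewEq T t k a w w')) /
    E (fun w' => ind (NewEq T t k a w w'))

theorem XiAt_next {n T : ℕ} (hT : 1 ≤ T) (M : Kernels X Y U) {γ : Strat Y U}
    (hγ : Admissible T γ) (k : Fin K) {t : ℕ} (ht : t < n)
    (iy : ℕ → ∀ j, Y j) (iu : ℕ → ∀ j, U j) (a : Sig n X Y U → ∀ j, U j)
    (ha : ∀ ω : Traj n X Y, InfoEq T γ k t iy iu ω → actAt γ ω t = a (sig T γ k t ω))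
    (hpos : Pr n M γ (InfoEq T γ k t iy iu) ≠ 0)
    {ω : Traj n X Y} (hω : InfoEq T γ k t iy iu ω) :
    XiAt n T M γ k (t + 1) ω = Gpost T t k a
      (fun Ψ => CE n M γ (InfoEq T γ k t iy iu) (fun ω => Ψ (tau T γ k t ω)))
      (tau T γ k t ω) := by
  funext x ly lu
  unfold XiAt Xi Gpost
  simp only [← condPr_eq_CE n M γ (fun ω' => NewEq T t k a (tau T γ k t ω) (tau T γ k t ω')),
    ← condPr_eq_CE n M γ (fun ω' => NewPost T t k a x ly lu (tau T γ k t ω') ∧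
      NewEq T t k a (tau T γ k t ω) (tau T γ k t ω'))]
  unfold condPr
  rw [div_div_div_cancel_right₀ hpos]
  congr 1
  · congr 1
    funext ω'
    apply propext
    rw [info_next hT hγ k ht iy iu a ha hω ω']
    constructor
    · rintro ⟨h1, h2, h3⟩
      exact ⟨⟨(post_next k ht a (ha ω' h3) x ly lu).1 h1, h2⟩, h3⟩
    · rintro ⟨⟨h1, h2⟩, h3⟩
      exact ⟨(post_next k ht a (ha ω' h3) x ly lu).2 h1, h2, h3⟩
  · congr 1
    funext ω'
    exact propext (info_next hT hγ k ht iy iu a ha hω ω')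

theorem updStrat_ne (γ : Strat Y U) (k : Fin K) (g : SStrat Y U k) {j : Fin K} (h : j ≠ k) :
    updStrat γ k g j = γ j := by
  simp [updStrat, h]

theorem act_profile {n T : ℕ} (hT : 1 ≤ T) {γ γ' : Strat Y U} (hγ : Admissible T γ) (k : Fin K)
    (hγγ' : ∀ j, j ≠ k → γ j = γ' j) {t : ℕ} (ht : t < n)
    (iy iy' : ℕ → ∀ j, Y j) (iu iu' : ℕ → ∀ j, U j) (u : U k)
    (hδy : ∀ s (j : Fin K), s + T ≤ t → iy s j = iy' s j)
    (hδu : ∀ s (j : Fin K), s + T ≤ t → iu s j = iu' s j)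
    {ω : Traj n X Y} (hω : InfoEq T γ k t iy iu ω) (hu : actAt γ ω t k = u) :
    actAt γ ω t = prof T t γ' k iy' iu' (sig T γ k t ω).2 u := by
  have hidx : ∀ s, s ≤ t → (idx n s).1 = s := by
    intro s hs
    simp only [idx]
    omega
  funext j
  unfold prof
  by_cases hj : j = k
  · subst hj; simp [hu]
  · rw [Function.update_of_ne hj, ← hγγ' j hj]
    refine hγ j t _ _ _ _ ?_ ?_ ?_ ?_
    · intro s i hs
      simp only [mixObs, hs, or_true, if_true]
      rw [← hδy s i hs]; exact hω.1 s i hs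
    · intro s i hs
      simp only [mixAct, hs, or_true, if_true]
      rw [← hδu s i hs, actUpto_eq _ _ _ _ (by omega)]; exact hω.2.1 s i hs
    · intro s hs
      by_cases h : s + T ≤ t
      · simp only [mixObs, h, or_true, if_true]
        rw [← hδy s j h]; exact hω.1 s j h
      · simp only [mixObs, h, hj, or_self, if_false, sig, hidx s hs]
        rw [if_pos ⟨hj, hs, by omega⟩]
        rfl
    · intro s hs
      by_cases h : s + T ≤ t
      · simp only [mixAct, h, or_true, if_true]
        rw [← hδu s j h, actUpto_eq _ _ _ _ hs]; exact hω.2.1 s j h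
      · simp only [mixAct, h, hj, or_self, if_false, sig, hidx s hs.le]
        rw [if_pos ⟨hj, hs, by omega⟩, actUpto_eq _ _ _ _ hs]
        rfl

theorem info_and_act {n T : ℕ} (hT : 1 ≤ T) (M : Kernels X Y U) {γ : Strat Y U}
    (hγ : Admissible T γ) (k : Fin K) {t : ℕ}
    (iy : ℕ → ∀ j, Y j) (iu : ℕ → ∀ j, U j) (u : U k)
    (hpos : 0 < Pr n M γ (fun ω => InfoEq T γ k t iy iu ω ∧ actAt γ ω t k = u)) :
    γ k t iy iu = u := by
  by_contra hne
  have : Pr n M γ (fun ω => InfoEq T γ k t iy iu ω ∧ actAt γ ω t k = u) = 0 := by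
    unfold Pr
    refine Finset.sum_eq_zero (fun ω _ => if_neg ?_)
    rintro ⟨h1, h2⟩
    exact hne ((info_act hγ hT k iy iu h1).symm.trans h2)
  linarith

theorem cond_next {n T : ℕ} (hT : 1 ≤ T) (M : Kernels X Y U) {γ : Strat Y U}
    (hγ : Admissible T γ) (k : Fin K) {t : ℕ} (ht : t < n)
    (iy : ℕ → ∀ j, Y j) (iu : ℕ → ∀ j, U j) (a : Sig n X Y U → ∀ j, U j)
    (ha : ∀ ω : Traj n X Y, InfoEq T γ k t iy iu ω → actAt γ ω t = a (sig T γ k t ω))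
    (hpos : Pr n M γ (InfoEq T γ k t iy iu) ≠ 0)
    (ξ : X → (ℕ → ∀ j, Y j) → (ℕ → ∀ j, U j) → ℝ) :
    condPr n M γ (fun ω => XiAt n T M γ k (t + 1) ω = ξ) (InfoEq T γ k t iy iu) =
      (fun Ψ => CE n M γ (InfoEq T γ k t iy iu) (fun ω => Ψ (tau T γ k t ω)))
        (fun w => ind (Gpost T t k a
          (fun Ψ => CE n M γ (InfoEq T γ k t iy iu) (fun ω => Ψ (tau T γ k t ω))) w = ξ)) := by
  rw [condPr_eq_CE]
  unfold CE
  congr 1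
  refine Finset.sum_congr rfl (fun ω _ => ?_)
  by_cases hB : InfoEq T γ k t iy iu ω
  · simp only [if_pos hB]
    rw [XiAt_next hT M hγ k ht iy iu a ha hpos hB]
    rfl
  · simp only [if_neg hB]

/-!  STATEMENT 8 (Lemma 4 (1): the private posterior process is conditionally Markov with
respect to the common data, with a transition kernel independent of station `k`'s
strategy). -/

/-- `ℙ^{γ^k,γ^{-k}}(Ξ_{t+1}^k[I_{t+1}^k] = ξ' | I_t^k = i_t^k, U_t^k = u)` depends on the
conditioning realization only through `(Ξ_t^k[i_t^k], δ_t^{(K)}, u)` and not on the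
strategy `γ^k` of station `k`: for two strategies `g₁, g₂` of station `k` (the other
stations' strategies being fixed) and two positive-probability realizations with the same
private posterior `Ξ_t^k`, the same common data `δ_t^{(K)}` and the same action `u`, the
conditional distributions of `Ξ_{t+1}^k` coincide. -/
theorem private_posterior_conditionally_Markov
    {X : Type} [Fintype X] [DecidableEq X] [Nonempty X]
    {K : ℕ} {Y U : Fin K → Type}
    [∀ k, Fintype (Y k)] [∀ k, DecidableEq (Y k)] [∀ k, Nonempty (Y k)]
    [∀ k, Fintype (U k)] [∀ k, DecidableEq (U k)] [∀ k, Nonempty (U k)]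
    (n T : ℕ) (hT : 1 ≤ T) (hTn : T ≤ n)
    (M : Kernels X Y U) (hM : M.IsPMF)
    (γb : Strat Y U) (k : Fin K) (g₁ g₂ : SStrat Y U k)
    (h₁ : Admissible T (updStrat γb k g₁))
    (h₂ : Admissible T (updStrat γb k g₂))
    (t : ℕ) (ht : t < n)
    (iy₁ : ℕ → ∀ j, Y j) (iu₁ : ℕ → ∀ j, U j)
    (iy₂ : ℕ → ∀ j, Y j) (iu₂ : ℕ → ∀ j, U j) (u : U k)
    (hpos₁ : 0 < Pr n M (updStrat γb k g₁)
      (fun ω => InfoEq T (updStrat γb k g₁) k t iy₁ iu₁ ω ∧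
        actAt (updStrat γb k g₁) ω t k = u))
    (hpos₂ : 0 < Pr n M (updStrat γb k g₂)
      (fun ω => InfoEq T (updStrat γb k g₂) k t iy₂ iu₂ ω ∧
        actAt (updStrat γb k g₂) ω t k = u))
    -- same private posterior `Ξ_t^k`
    (hXi : ∀ x ly lu, Xi n T M (updStrat γb k g₁) k t iy₁ iu₁ x ly lu =
        Xi n T M (updStrat γb k g₂) k t iy₂ iu₂ x ly lu)
    -- same common data `δ_t^{(K)}`
    (hδy : ∀ s (j : Fin K), s + T ≤ t → iy₁ s j = iy₂ s j)
    (hδu : ∀ s (j : Fin K), s + T ≤ t → iu₁ s j = iu₂ s j) :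
    ∀ ξ' : X → (ℕ → ∀ j, Y j) → (ℕ → ∀ j, U j) → ℝ,
      condPr n M (updStrat γb k g₁)
        (fun ω => XiAt n T M (updStrat γb k g₁) k (t + 1) ω = ξ')
        (fun ω => InfoEq T (updStrat γb k g₁) k t iy₁ iu₁ ω ∧
          actAt (updStrat γb k g₁) ω t k = u) =
      condPr n M (updStrat γb k g₂)
        (fun ω => XiAt n T M (updStrat γb k g₂) k (t + 1) ω = ξ')
        (fun ω => InfoEq T (updStrat γb k g₂) k t iy₂ iu₂ ω ∧
          actAt (updStrat γb k g₂) ω t k = u) := by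
  intro ξ'
  have e₁ := info_and_act hT M h₁ k iy₁ iu₁ u hpos₁
  have e₂ := info_and_act hT M h₂ k iy₂ iu₂ u hpos₂
  have b₁ : (fun ω : Traj n X Y => InfoEq T (updStrat γb k g₁) k t iy₁ iu₁ ω ∧
      actAt (updStrat γb k g₁) ω t k = u) = InfoEq T (updStrat γb k g₁) k t iy₁ iu₁ := by
    funext ω
    exact propext ⟨fun h => h.1, fun h => ⟨h, (info_act h₁ hT k iy₁ iu₁ h).trans e₁⟩⟩
  have b₂ : (fun ω : Traj n X Y => InfoEq T (updStrat γb k g₂) k t iy₂ iu₂ ω ∧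
      actAt (updStrat γb k g₂) ω t k = u) = InfoEq T (updStrat γb k g₂) k t iy₂ iu₂ := by
    funext ω
    exact propext ⟨fun h => h.1, fun h => ⟨h, (info_act h₂ hT k iy₂ iu₂ h).trans e₂⟩⟩
  rw [b₁] at hpos₁ ⊢
  rw [b₂] at hpos₂ ⊢
  let a : Sig n X Y U → ∀ j, U j := fun v => prof T t γb k iy₁ iu₁ v.2 u
  have ha₁ : ∀ ω : Traj n X Y, InfoEq T (updStrat γb k g₁) k t iy₁ iu₁ ω →
      actAt (updStrat γb k g₁) ω t = a (sig T (updStrat γb k g₁) k t ω) := by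
    intro ω h
    exact act_profile hT h₁ k (fun j hj => updStrat_ne γb k g₁ hj) ht iy₁ iy₁ iu₁ iu₁ u
      (fun _ _ _ => rfl) (fun _ _ _ => rfl) h ((info_act h₁ hT k iy₁ iu₁ h).trans e₁)
  have ha₂ : ∀ ω : Traj n X Y, InfoEq T (updStrat γb k g₂) k t iy₂ iu₂ ω →
      actAt (updStrat γb k g₂) ω t = a (sig T (updStrat γb k g₂) k t ω) := by
    intro ω h
    exact act_profile hT h₂ k (fun j hj => updStrat_ne γb k g₂ hj) ht iy₂ iy₁ iu₂ iu₁ u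
      (fun s j hs => (hδy s j hs).symm) (fun s j hs => (hδu s j hs).symm) h
      ((info_act h₂ hT k iy₂ iu₂ h).trans e₂)
  have hE : (fun Ψ : Sig n X Y U × (X × (∀ j, Y j)) → ℝ => CE n M (updStrat γb k g₁) (InfoEq T (updStrat γb k g₁) k t iy₁ iu₁)
        (fun ω => Ψ (tau T (updStrat γb k g₁) k t ω))) =
      (fun Ψ : Sig n X Y U × (X × (∀ j, Y j)) → ℝ => CE n M (updStrat γb k g₂) (InfoEq T (updStrat γb k g₂) k t iy₂ iu₂)
        (fun ω => Ψ (tau T (updStrat γb k g₂) k t ω))) := by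
    funext Ψ
    refine (CE_next hT M hM h₁ k ht iy₁ iu₁ a ha₁ Ψ).trans
      (Eq.trans ?_ (CE_next hT M hM h₂ k ht iy₂ iu₂ a ha₂ Ψ).symm)
    simp only [hXi]
  rw [cond_next hT M h₁ k ht iy₁ iu₁ a ha₁ hpos₁.ne',
    cond_next hT M h₂ k ht iy₂ iu₂ a ha₂ hpos₂.ne', hE]

end DelayedSharing
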